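/- Let G be a finite simple graph with maximum average degree mad(G) < 4 and maximum degree Δ(G) ≥ 7. Then χ_i(G) ≤ Δ(G) + 3. -/

import Mathlib

open SimpleGraph

/-- An incidence coloring of `G` with `n` colors, where `φ v u` is the color of the
incidence `(v, vu)` (meaningful when `G.Adj v u`): two distinct adjacent incidences
`(v, vu)` and `(w, wx)` receive distinct colors. Incidences `(v, e)` and `(w, f)` are
adjacent if `v = w`, or `e = f`, or the edge `vw` equals `e` or `f`. -/
def IsIncidenceColoring {V : Type*} (G : SimpleGraph V) {n : ℕ} (φ : V → V → Fin n) : Prop :=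
  ∀ ⦃v u w x : V⦄, G.Adj v u → G.Adj w x → (v, u) ≠ (w, x) →
    (v = w ∨ s(v, u) = s(w, x) ∨ s(v, w) = s(v, u) ∨ s(v, w) = s(w, x)) →
    φ v u ≠ φ w x

/-- `G` admits an incidence `(n, ℓ)`-coloring: an incidence coloring with `n` colors such
that for every vertex `v`, at most `ℓ` distinct colors appear on the incidences of the
form `(u, uv)` where `u` ranges over the neighbors of `v`. -/
def HasIncidenceColoring {V : Type*} (G : SimpleGraph V) (n ℓ : ℕ) : Prop :=
  ∃ φ : V → V → Fin n, IsIncidenceColoring G φ ∧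
    ∀ v : V, ({c : Fin n | ∃ u : V, G.Adj u v ∧ φ u v = c}).ncard ≤ ℓ

/-- The incidence chromatic number: the least `n` such that `G` admits an incidence
`n`-coloring. -/
noncomputable def incChromaticNumber {V : Type*} (G : SimpleGraph V) : ℕ :=
  sInf {n : ℕ | ∃ φ : V → V → Fin n, IsIncidenceColoring G φ}

/-- `mad(G) < q`: every nonempty subgraph `H` of `G` satisfies `2|E(H)| < q·|V(H)|`. -/
def MadLT {V : Type*} (G : SimpleGraph V) (q : ℝ) : Prop :=
  ∀ H : G.Subgraph, H.verts.Nonempty →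
    (2 * H.edgeSet.ncard : ℝ) < q * H.verts.ncard

/-!
A coloring of the incidences is extended together with a palette of three colors at each vertex `v`,
which contains the colors of the incidences `(u, uv)`. In a minimal counterexample `G`, the
incidences that remain after deleting the edges at a vertex `v` of degree at most three have a
palette coloring. It extends to `G` if each neighbor `u` of `v` has a free color for `(u, uv)` and,
by Hall's theorem, the palettes of the neighbors still contain distinct colors for the incidences
`(v, vu)`. If this fails although a neighbor `u` has small degree, one first recolors the incidences
`(w, wu)`, which changes the palette of `u`. This excludes vertices of degree one and two, and most
neighborhoods of vertices of degree three.

Now give every vertex its degree as charge and let the vertices of larger degree send charge to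
their neighbors of degree three and four. Since only the remaining neighborhoods occur, every
non-isolated vertex ends up with charge at least four, which contradicts `mad G < 4`.
-/

section PaletteColoring

open Finset Function

variable {V α : Type*} {G : SimpleGraph V} {c : V → V → α} {S : V → Finset α}

/-- A palette coloring: `c v u` is the color of the incidence `(v, vu)`, and the palette `S v` is a
set of at most three colors that contains the colors of all incidences `(u, uv)` and none of the
colors of the incidences `(v, vu)`. Carrying the palettes along, instead of only the sets of colors
of the incidences `(u, uv)`, leaves the freedom to enlarge them when a coloring is extended. -/
structure IsPaletteColoring (G : SimpleGraph V) (c : V → V → α) (S : V → Finset α) : Prop where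
  card_le : ∀ v, #(S v) ≤ 3
  mem : ∀ ⦃v u⦄, G.Adj v u → c v u ∈ S u
  notMem : ∀ ⦃v u⦄, G.Adj v u → c v u ∉ S v
  injOn : ∀ v, Set.InjOn (c v) (G.neighborSet v)

/-- `G` has a palette coloring with colors in `α`, that is, an incidence `(|α|, 3)`-coloring. -/
def PaletteColorable (G : SimpleGraph V) (α : Type*) : Prop :=
  ∃ (c : V → V → α) (S : V → Finset α), IsPaletteColoring G c S

lemma IsPaletteColoring.isIncidenceColoring {n : ℕ} {c : V → V → Fin n} {S : V → Finset (Fin n)}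
    (h : IsPaletteColoring G c S) : IsIncidenceColoring G c := by
  have ne_of_path : ∀ {v u w}, G.Adj v u → G.Adj u w → c v u ≠ c u w := fun hvu huw heq =>
    h.notMem huw (heq ▸ h.mem hvu)
  rintro v u w x hvu hwx hne (rfl | he | he | he)
  · exact fun heq => hne (by rw [h.injOn v hvu hwx heq])
  · obtain ⟨rfl, rfl⟩ | ⟨rfl, rfl⟩ := Sym2.eq_iff.1 he
    · exact absurd rfl hne
    · exact ne_of_path hvu hwx
  · obtain rfl : w = u := Sym2.congr_right.1 he
    exact ne_of_path hvu hwx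
  · obtain rfl : v = x := Sym2.congr_right.1 (Sym2.eq_swap.trans he)
    exact (ne_of_path hwx hvu).symm

lemma PaletteColorable.hasIncidenceColoring {n : ℕ} (h : PaletteColorable G (Fin n)) :
    HasIncidenceColoring G n 3 := by
  obtain ⟨c, S, h⟩ := h
  refine ⟨c, h.isIncidenceColoring, fun v => ?_⟩
  have hsub : {a | ∃ u, G.Adj u v ∧ c u v = a} ⊆ (S v : Set (Fin n)) := by
    rintro _ ⟨u, huv, rfl⟩
    exact h.mem huv
  exact (Set.ncard_le_ncard hsub).trans ((Set.ncard_coe_finset _).trans_le (h.card_le v))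

lemma paletteColorable_of_forall_not_adj [Nonempty α] (hG : ∀ v u, ¬G.Adj v u) :
    PaletteColorable G α :=
  ⟨fun _ _ => Classical.arbitrary α, fun _ => ∅, by simp, fun v u h => absurd h (hG v u),
    fun v u h => absurd h (hG v u), fun v u h => absurd h (hG v u)⟩

section OutColors

variable [DecidableEq α]

/-- The colors of the incidences `(v, vu)`, where `u` ranges over the neighbors of `v`. -/
def outColors (G : SimpleGraph V) [G.LocallyFinite] (c : V → V → α) (v : V) : Finset α :=
  (G.neighborFinset v).image (c v)

lemma card_outColors_le [G.LocallyFinite] (v : V) : #(outColors G c v) ≤ G.degree v :=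
  card_image_le

@[simp]
lemma mem_outColors [G.LocallyFinite] {v : V} {b : α} :
    b ∈ outColors G c v ↔ ∃ u, G.Adj v u ∧ c v u = b := by
  simp [outColors]

lemma IsPaletteColoring.disjoint_outColors [G.LocallyFinite] (h : IsPaletteColoring G c S)
    (v : V) : Disjoint (S v) (outColors G c v) := by
  refine disjoint_left.2 fun b hb hb' => ?_
  obtain ⟨u, hvu, rfl⟩ := mem_outColors.1 hb'
  exact h.notMem hvu hb

end OutColors

lemma PaletteColorable.exists_card_eq_three [Fintype α] [G.LocallyFinite]
    (h : PaletteColorable G α) (hdeg : ∀ v, G.degree v + 3 ≤ Fintype.card α) :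
    ∃ (c : V → V → α) (S : V → Finset α), IsPaletteColoring G c S ∧ ∀ v, #(S v) = 3 := by
  classical
  obtain ⟨c, S, h⟩ := h
  have hT : ∀ v, ∃ T, S v ⊆ T ∧ T ⊆ (outColors G c v)ᶜ ∧ #T = 3 := fun v => by
    refine exists_subsuperset_card_eq ?_ (h.card_le v) ?_
    · exact (h.disjoint_outColors v).le_compl_right
    · have := card_outColors_le (G := G) (c := c) v
      have := hdeg v
      rw [card_compl]
      omega
  choose T hST hTout hT3 using hT
  refine ⟨c, T, ⟨fun v => (hT3 v).le, fun v u hvu => hST u (h.mem hvu), fun v u hvu hmem => ?_,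
    h.injOn⟩, hT3⟩
  exact mem_compl.1 (hTout v hmem) (mem_outColors.2 ⟨u, hvu, rfl⟩)

variable [Fintype α] [DecidableEq α]

/-- The colors that a new incidence `(u, uv)` may receive in view of the incidences already colored
at `u`. -/
def freeColors (G : SimpleGraph V) [G.LocallyFinite] (c : V → V → α) (S : V → Finset α) (u : V) :
    Finset α :=
  (S u ∪ outColors G c u)ᶜ

@[simp]
lemma mem_freeColors [G.LocallyFinite] {u : V} {b : α} :
    b ∈ freeColors G c S u ↔ b ∉ S u ∧ ∀ w, G.Adj u w → c u w ≠ b := by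
  simp [freeColors]

lemma card_le_card_freeColors_add [G.LocallyFinite] (u : V) :
    Fintype.card α ≤ #(freeColors G c S u) + #(S u) + G.degree u := by
  have h₁ := card_union_le (S u) (outColors G c u)
  have h₂ := card_outColors_le (G := G) (c := c) u
  rw [freeColors, card_compl]
  omega

variable [DecidableEq V]

/-- The colors that may replace the color of the incidence `(w, wu)` when all incidences `(y, yu)`
are recolored simultaneously and the palette of `u` is replaced accordingly. -/
def recolorings (G : SimpleGraph V) [G.LocallyFinite] (c : V → V → α) (S : V → Finset α)
    (u w : V) : Finset α :=
  (S w ∪ outColors G c u ∪ ((G.neighborFinset w).erase u).image (c w))ᶜ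

@[simp]
lemma mem_recolorings [G.LocallyFinite] {u w : V} {b : α} :
    b ∈ recolorings G c S u w ↔
      b ∉ S w ∧ (∀ z, G.Adj u z → c u z ≠ b) ∧ ∀ z, G.Adj w z → z ≠ u → c w z ≠ b := by
  simp only [recolorings, mem_compl, mem_union, mem_outColors, mem_image, mem_erase,
    mem_neighborFinset]
  grind

lemma disjoint_image_outColors_of_mem_recolorings [G.LocallyFinite] {u : V} {g : V → α}
    (hg : ∀ w, G.Adj u w → g w ∈ recolorings G c S u w) :
    Disjoint ((G.neighborFinset u).image g) (outColors G c u) := by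
  refine disjoint_left.2 fun b hb hb' => ?_
  obtain ⟨w, hw, rfl⟩ := mem_image.1 hb
  obtain ⟨z, hz, hzw⟩ := mem_outColors.1 hb'
  exact (mem_recolorings.1 (hg w ((G.mem_neighborFinset u w).1 hw))).2.1 z hz hzw

lemma IsPaletteColoring.mem_recolorings_self [G.LocallyFinite] (h : IsPaletteColoring G c S)
    {u w : V} (huw : G.Adj u w) : c w u ∈ recolorings G c S u w :=
  mem_recolorings.2 ⟨h.notMem huw.symm, fun _ huz heq => h.notMem huz (heq ▸ h.mem huw.symm),
    fun _ hwz hne heq => hne (h.injOn w hwz huw.symm heq)⟩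

lemma IsPaletteColoring.card_add_two_le_card_recolorings_add [G.LocallyFinite]
    (h : IsPaletteColoring G c S) {u w : V} (huw : G.Adj u w) :
    Fintype.card α + 2 ≤ #(recolorings G c S u w) + #(S w) + G.degree u + G.degree w := by
  -- The color of `(u, uw)` is counted in the palette of `w`, too.
  have hcompl : S w ∪ outColors G c u ∪ ((G.neighborFinset w).erase u).image (c w) ⊆
      S w ∪ (outColors G c u).erase (c u w) ∪ ((G.neighborFinset w).erase u).image (c w) := by
    gcongr ?_ ∪ _
    intro b hb
    have := h.mem huw
    grind
  have hout : #((outColors G c u).erase (c u w)) + 1 ≤ G.degree u := by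
    rw [card_erase_add_one (mem_outColors.2 ⟨w, huw, rfl⟩)]
    exact card_outColors_le u
  have himage : #(((G.neighborFinset w).erase u).image (c w)) + 1 ≤ G.degree w := by
    rw [← card_neighborFinset_eq_degree,
      ← card_erase_add_one ((G.mem_neighborFinset w u).2 huw.symm)]
    exact Nat.succ_le_succ card_image_le
  have h₁ := card_le_card hcompl
  have h₂ := card_union_le (S w ∪ (outColors G c u).erase (c u w))
    (((G.neighborFinset w).erase u).image (c w))
  have h₃ := card_union_le (S w) ((outColors G c u).erase (c u w))
  rw [recolorings, card_compl]
  omega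

lemma IsPaletteColoring.recolor [G.LocallyFinite] (h : IsPaletteColoring G c S) {u : V}
    {g : V → α} {T : Finset α} (hg : ∀ w, G.Adj u w → g w ∈ recolorings G c S u w)
    (hgT : ∀ w, G.Adj u w → g w ∈ T) (hT : #T ≤ 3) (hTout : Disjoint T (outColors G c u)) :
    IsPaletteColoring G (fun w => update (c w) u (g w)) (update S u T) where
  card_le v := by
    obtain rfl | hv := eq_or_ne v u
    · simpa using hT
    · simpa [hv] using h.card_le v
  mem v w hvw := by
    obtain rfl | hw := eq_or_ne w u
    · simpa using hgT v hvw.symm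
    · simpa [hw] using h.mem hvw
  notMem v w hvw := by
    obtain rfl | hw := eq_or_ne w u
    · simpa [hvw.ne] using (mem_recolorings.1 (hg v hvw.symm)).1
    · obtain rfl | hv := eq_or_ne v u
      · simpa [hw] using disjoint_right.1 hTout (mem_outColors.2 ⟨w, hvw, rfl⟩)
      · simpa [hw, hv] using h.notMem hvw
  injOn v w hvw z hvz heq := by
    have hne : ∀ y, G.Adj v u → G.Adj v y → y ≠ u → c v y ≠ g v := fun y hvu =>
      (mem_recolorings.1 (hg v hvu.symm)).2.2 y
    by_cases hw : w = u <;> by_cases hz : z = u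
    · rw [hw, hz]
    · subst hw
      exact absurd (by simpa [hz] using heq.symm) (hne z hvw hvz hz)
    · subst hz
      exact absurd (by simpa [hw] using heq) (hne w hvz hvw hw)
    · exact h.injOn v hvw hvz (by simpa [hw, hz] using heq)

end PaletteColoring

section SystemsOfRepresentatives

open Finset

variable {ι α : Type*} {N : Finset ι} {L : ι → Finset α}

lemma exists_injOn_of_forall_card_le_card_biUnion [Nonempty α] [DecidableEq α]
    (hall : ∀ s ⊆ N, #s ≤ #(s.biUnion L)) :
    ∃ x : ι → α, (∀ i ∈ N, x i ∈ L i) ∧ Set.InjOn x N := by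
  classical
  obtain ⟨f, hinj, hf⟩ := (all_card_le_biUnion_card_iff_exists_injective
    fun i : N => L i).1 fun s => by
      have hs := hall (s.map (.subtype _)) (map_subtype_subset s)
      rwa [card_map, map_eq_image, image_biUnion] at hs
  refine ⟨Function.extend Subtype.val f fun _ => Classical.arbitrary α, fun i hi => ?_,
    fun i hi j hj heq => ?_⟩
  · simpa using (Subtype.val_injective.extend_apply f _ ⟨i, hi⟩).symm ▸ hf ⟨i, hi⟩
  · rw [Subtype.val_injective.extend_apply f _ ⟨i, hi⟩,
      Subtype.val_injective.extend_apply f _ ⟨j, hj⟩] at heq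
    exact congrArg Subtype.val (hinj heq)

lemma exists_injOn_of_card_le_card [Nonempty α] (hL : ∀ i ∈ N, #N ≤ #(L i)) :
    ∃ x : ι → α, (∀ i ∈ N, x i ∈ L i) ∧ Set.InjOn x N := by
  classical
  refine exists_injOn_of_forall_card_le_card_biUnion fun s hs => ?_
  obtain rfl | ⟨i, hi⟩ := s.eq_empty_or_nonempty
  · simp
  · exact (card_le_card hs).trans <| (hL i (hs hi)).trans <|
      card_le_card (subset_biUnion_of_mem L hi)

lemma three_le_card_and_subset_of_forall_superset_subset [Fintype α] {O P Q : Finset α}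
    (hP : #P ≤ 3) (hPO : Disjoint P O) (hcard : #Q + #O < Fintype.card α)
    (hQ : ∀ T, P ⊆ T → #T ≤ 3 → Disjoint T O → T ⊆ Q) : 3 ≤ #P ∧ P ⊆ Q := by
  classical
  refine ⟨?_, hQ P subset_rfl hP hPO⟩
  by_contra! hlt
  obtain ⟨t, -, ht⟩ : ∃ t ∈ univ, t ∉ Q ∪ O :=
    exists_mem_notMem_of_card_lt_card ((card_union_le Q O).trans_lt hcard)
  rw [mem_union, not_or] at ht
  exact ht.1 <| hQ (insert t P) (subset_insert t P) ((card_insert_le t P).trans hlt)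
    (disjoint_insert_left.2 ⟨ht.2, hPO⟩) (mem_insert_self t P)

variable [DecidableEq α]

lemma exists_injOn_of_three_le_card_biUnion [DecidableEq ι] {i : ι} (hN : #N ≤ 3)
    (hi : (L i).Nonempty) (htwo : ∀ j ∈ N.erase i, 2 ≤ #(L j))
    (hthree : 3 ≤ #(N.biUnion L)) :
    ∃ x : ι → α, (∀ j ∈ N, x j ∈ L j) ∧ Set.InjOn x N := by
  have : Nonempty α := ⟨hi.choose⟩
  refine exists_injOn_of_forall_card_le_card_biUnion fun s hs => ?_
  by_cases hs₃ : 3 ≤ #s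
  · rw [eq_of_subset_of_card_le hs (hN.trans hs₃)]
    exact hN.trans hthree
  by_cases hsi : s ⊆ {i}
  · obtain rfl | rfl := subset_singleton_iff.1 hsi
    · simp
    · simpa using hi
  · obtain ⟨j, hj, hji⟩ := not_subset.1 hsi
    have h₂ := htwo j (mem_erase.2 ⟨by simpa using hji, hs hj⟩)
    have := card_le_card (subset_biUnion_of_mem L hj)
    omega

lemma card_lt_card_sdiff_image_add_card {a : ι → α} {i : ι} {A : Finset α} (hi : i ∈ N)
    (ha : a i ∉ A) : #A < #(A \ N.image a) + #N := by
  classical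
  have hsub : A \ (N.erase i).image a ⊆ A \ N.image a := by
    intro b hb
    simp only [mem_sdiff, mem_image, mem_erase, not_exists, not_and] at hb ⊢
    refine ⟨hb.1, fun j hj hjb => hb.2 j ⟨?_, hj⟩ hjb⟩
    rintro rfl
    exact ha (hjb ▸ hb.1)
  have h₁ := card_le_card hsub
  have h₂ := le_card_sdiff ((N.erase i).image a) A
  have h₃ : #((N.erase i).image a) ≤ #(N.erase i) := card_image_le
  have h₄ := card_erase_add_one hi
  omega

lemma image_update_update_eq_insert_insert [DecidableEq ι] {f : ι → α} {i j : ι} (hi : i ∈ N)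
    (hj : j ∈ N) (hij : i ≠ j) (a b : α) :
    N.image (Function.update (Function.update f i a) j b) =
      insert a (insert b (((N.erase i).erase j).image f)) := by
  have hj' : j ∈ N.erase i := mem_erase.2 ⟨hij.symm, hj⟩
  have hcongr : ((N.erase i).erase j).image (Function.update (Function.update f i a) j b) =
      ((N.erase i).erase j).image f := image_congr fun k hk => by
    have : k ≠ j ∧ k ≠ i := by grind
    simp [this]
  conv_lhs => rw [← insert_erase hi, ← insert_erase hj', image_insert, image_insert, hcongr]
  simp [hij]

lemma exists_three_le_card_sdiff_pair_union {A B F : Finset α} {d : α} (hA : #A = 3) (hB : #B = 3)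
    (hF : 1 < #F) (hAF : Disjoint A F) (hd : d ∉ B) :
    ∃ e ∈ F, 3 ≤ #((A \ {e, d}) ∪ (B \ {e, d})) := by
  obtain ⟨b, hb, b', hb', hne⟩ := one_lt_card.1 hF
  have hbA := disjoint_right.1 hAF hb
  have hb'A := disjoint_right.1 hAF hb'
  by_cases hbB : b ∈ B
  · refine ⟨b', hb', ?_⟩
    have hsub : insert b (A \ {d}) ⊆ (A \ {b', d}) ∪ (B \ {b', d}) := by grind
    have hcard : #(insert b (A \ {d})) = #(A \ {d}) + 1 :=
      card_insert_of_notMem (by simp [hbA])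
    have h₁ := le_card_sdiff {d} A
    have h₂ := card_le_card hsub
    rw [card_singleton] at h₁
    omega
  · refine ⟨b, hb, ?_⟩
    have hlist : B \ {b, d} = B := by simp [hbB, hd]
    rw [hlist, ← hB]
    exact card_le_card subset_union_right

lemma five_le_card_of_forall_three_le_card_insert {A B P Q : Finset α} (hA : 2 ≤ #A) (hB : 2 ≤ #B)
    (hP : #P ≤ 1) (hcard : ∀ a ∈ A, ∀ b ∈ B, 3 ≤ #(insert a (insert b P)))
    (hsub : ∀ a ∈ A, ∀ b ∈ B, insert a (insert b P) ⊆ Q) : 5 ≤ #Q := by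
  have hnotMem : ∀ a ∈ A, ∀ b ∈ B, a ∉ insert b P ∧ b ∉ P ∧ 1 ≤ #P := by
    intro a ha b hb
    have h₃ := hcard a ha b hb
    have hb' := card_insert_le b P
    by_cases haP : a ∈ insert b P
    · rw [insert_eq_of_mem haP] at h₃
      omega
    by_cases hbP : b ∈ P
    · rw [card_insert_of_notMem haP, insert_eq_of_mem hbP] at h₃
      omega
    · rw [card_insert_of_notMem haP] at h₃
      exact ⟨haP, hbP, by omega⟩
  obtain ⟨a, ha⟩ : A.Nonempty := card_pos.1 (by omega)
  obtain ⟨b, hb⟩ : B.Nonempty := card_pos.1 (by omega)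
  have hAB : Disjoint A B := disjoint_left.2 fun x hxA hxB =>
    (hnotMem x hxA x hxB).1 (mem_insert_self x P)
  have hABP : Disjoint (A ∪ B) P := disjoint_left.2 fun x hx hxP => by
    obtain hxA | hxB := mem_union.1 hx
    · exact (hnotMem x hxA b hb).1 (mem_insert_of_mem hxP)
    · exact (hnotMem a ha x hxB).2.1 hxP
  have hABPQ : A ∪ B ∪ P ⊆ Q := union_subset
    (union_subset (fun x hx => hsub x hx b hb (mem_insert_self x _))
      fun x hx => hsub a ha x hx (mem_insert_of_mem (mem_insert_self x P)))
    fun x hx => hsub a ha b hb (mem_insert_of_mem (mem_insert_of_mem hx))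
  have := card_le_card hABPQ
  rw [card_union_of_disjoint hABP, card_union_of_disjoint hAB] at this
  have := (hnotMem a ha b hb).2.2
  omega

end SystemsOfRepresentatives

section VertexExtension

open Finset Function

variable {V α : Type*} [Fintype V] [DecidableEq V] {G : SimpleGraph V} [DecidableRel G.Adj]
  {c : V → V → α} {S : V → Finset α} {u v : V}

lemma neighborFinset_deleteIncidenceSet_of_adj (hvu : G.Adj v u) :
    (G.deleteIncidenceSet v).neighborFinset u = (G.neighborFinset u).erase v := by
  ext w
  simp only [mem_neighborFinset, deleteIncidenceSet_adj, mem_erase]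
  exact ⟨fun h => ⟨h.2.2, h.1⟩, fun h => ⟨h.2, hvu.ne', h.1⟩⟩

lemma degree_deleteIncidenceSet_add_one (hvu : G.Adj v u) :
    (G.deleteIncidenceSet v).degree u + 1 = G.degree u := by
  rw [← card_neighborFinset_eq_degree, neighborFinset_deleteIncidenceSet_of_adj hvu,
    card_erase_add_one ((G.mem_neighborFinset u v).2 hvu.symm), card_neighborFinset_eq_degree]

lemma degree_deleteIncidenceSet_le : (G.deleteIncidenceSet v).degree u ≤ G.degree u :=
  degree_le_of_le (deleteIncidenceSet_le G v)

variable [Fintype α] [DecidableEq α]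

lemma IsPaletteColoring.extend (h : IsPaletteColoring (G.deleteIncidenceSet v) c S)
    (hv : G.degree v ≤ 3) {a x : V → α}
    (ha : ∀ u ∈ G.neighborFinset v, a u ∈ freeColors (G.deleteIncidenceSet v) c S u)
    (hx : ∀ u ∈ G.neighborFinset v, x u ∈ S u \ (G.neighborFinset v).image a)
    (hinj : Set.InjOn x (G.neighborFinset v)) : PaletteColorable G α := by
  simp only [mem_neighborFinset, mem_freeColors, deleteIncidenceSet_adj, mem_sdiff, mem_image,
    not_exists, not_and, coe_neighborFinset] at ha hx hinj
  refine ⟨fun y z => if y = v then x z else if z = v then a y else c y z,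
    update S v ((G.neighborFinset v).image a), fun y => ?_, fun y z hyz => ?_, fun y z hyz => ?_,
    fun y z hyz w hyw heq => ?_⟩
  · obtain rfl | hy := eq_or_ne y v
    · simpa using card_image_le.trans hv
    · simpa [hy] using h.card_le y
  · obtain rfl | hy := eq_or_ne y v
    · simpa [hyz.ne'] using (hx z hyz).1
    · obtain rfl | hz := eq_or_ne z v
      · simpa [hy] using ⟨y, hyz.symm, rfl⟩
      · simpa [hy, hz] using h.mem (deleteIncidenceSet_adj.2 ⟨hyz, hy, hz⟩)
  · obtain rfl | hy := eq_or_ne y v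
    · simpa using (hx z hyz).2
    · obtain rfl | hz := eq_or_ne z v
      · simpa [hy] using (ha y hyz.symm).1
      · simpa [hy, hz] using h.notMem (deleteIncidenceSet_adj.2 ⟨hyz, hy, hz⟩)
  · obtain rfl | hy := eq_or_ne y v
    · exact hinj hyz hyw (by simpa using heq)
    · have hne : ∀ w, G.Adj y v → G.Adj y w → w ≠ v → c y w ≠ a y := fun w hyv hyw hw =>
        (ha y hyv.symm).2 w ⟨hyw, hy, hw⟩
      by_cases hz : z = v <;> by_cases hw : w = v
      · rw [hz, hw]
      · subst hz
        exact absurd (by simpa [hy, hw] using heq.symm) (hne w hyz hyw hw)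
      · subst hw
        exact absurd (by simpa [hy, hz] using heq) (hne z hyw hyz hz)
      · exact h.injOn y (deleteIncidenceSet_adj.2 ⟨hyz, hy, hz⟩)
          (deleteIncidenceSet_adj.2 ⟨hyw, hy, hw⟩) (by simpa [hy, hz, hw] using heq)

-- The incidence `(u, uv)` is colored last: its color only has to avoid the colors `x w` with
-- `w ≠ u`, since a free color at `u` is not in the palette that contains `x u`.
lemma IsPaletteColoring.extend_of_card_lt (h : IsPaletteColoring (G.deleteIncidenceSet v) c S)
    (hv : G.degree v ≤ 3) (hvu : G.Adj v u)
    (hcard : #(S u) + G.degree u + G.degree v < Fintype.card α + 2) {a x : V → α}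
    (ha : ∀ w ∈ (G.neighborFinset v).erase u, a w ∈ freeColors (G.deleteIncidenceSet v) c S w)
    (hx : ∀ w ∈ G.neighborFinset v, x w ∈ S w \ ((G.neighborFinset v).erase u).image a)
    (hinj : Set.InjOn x (G.neighborFinset v)) : PaletteColorable G α := by
  set M := (G.neighborFinset v).erase u with hM
  obtain ⟨b, hb, hbx⟩ : ∃ b ∈ freeColors (G.deleteIncidenceSet v) c S u, b ∉ M.image x := by
    have hMcard : #M + 1 = G.degree v := card_erase_add_one ((G.mem_neighborFinset v u).2 hvu)
    have := card_image_le (s := M) (f := x)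
    have := card_le_card_freeColors_add (G := G.deleteIncidenceSet v) (c := c) (S := S) u
    have := degree_deleteIncidenceSet_add_one hvu
    exact exists_mem_notMem_of_card_lt_card (by omega)
  refine h.extend hv (a := update a u b) (fun w hw => ?_) (fun w hw => ?_) hinj
  · obtain rfl | hwu := eq_or_ne w u
    · simpa using hb
    · simpa [hwu] using ha w (mem_erase.2 ⟨hwu, hw⟩)
  · have himage : (G.neighborFinset v).image (update a u b) = insert b (M.image a) := by
      rw [← insert_erase ((G.mem_neighborFinset v u).2 hvu), image_insert, update_self]
      exact congrArg _ (image_congr fun y hy => update_of_ne (ne_of_mem_erase hy) _ _)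
    obtain ⟨hxS, hxa⟩ := mem_sdiff.1 (hx w hw)
    rw [himage, mem_sdiff, mem_insert, not_or]
    refine ⟨hxS, ?_, hxa⟩
    rintro rfl
    obtain rfl | hwu := eq_or_ne w u
    · exact (mem_freeColors.1 hb).1 hxS
    · exact hbx (mem_image_of_mem x (mem_erase.2 ⟨hwu, hw⟩))

end VertexExtension

section ReducibleConfigurations

open Finset Function

variable {V α : Type*} [Fintype V] {G : SimpleGraph V} [DecidableRel G.Adj] [Fintype α]
  {c : V → V → α} {S : V → Finset α} {u v : V}

lemma exists_forall_mem_freeColors [DecidableEq V] [DecidableEq α] (hS : ∀ w, #(S w) ≤ 3)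
    (hdeg : ∀ w, G.degree w + 3 ≤ Fintype.card α) :
    ∃ a : V → α, ∀ w ∈ G.neighborFinset v, a w ∈ freeColors (G.deleteIncidenceSet v) c S w := by
  have : Nonempty α := Fintype.card_pos_iff.1 (by have := hdeg v; omega)
  have hfree : ∀ w ∈ G.neighborFinset v, (freeColors (G.deleteIncidenceSet v) c S w).Nonempty := by
    intro w hw
    have := card_le_card_freeColors_add (G := G.deleteIncidenceSet v) (c := c) (S := S) w
    have := degree_deleteIncidenceSet_add_one ((G.mem_neighborFinset v w).1 hw)
    have := hS w
    have := hdeg w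
    exact card_pos.1 (by omega)
  choose! a ha using hfree
  exact ⟨a, ha⟩

lemma PaletteColorable.exists_card_eq_three_deleteIncidenceSet
    (h : PaletteColorable (G.deleteIncidenceSet v) α)
    (hdeg : ∀ w, G.degree w + 3 ≤ Fintype.card α) :
    ∃ (c : V → V → α) (S : V → Finset α),
      IsPaletteColoring (G.deleteIncidenceSet v) c S ∧ ∀ w, #(S w) = 3 := by
  classical
  exact h.exists_card_eq_three fun w =>
    (Nat.add_le_add_right degree_deleteIncidenceSet_le 3).trans (hdeg w)

lemma PaletteColorable.of_degree_le_two (h : PaletteColorable (G.deleteIncidenceSet v) α)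
    (hdeg : ∀ w, G.degree w + 3 ≤ Fintype.card α) (hv : G.degree v ≤ 2) :
    PaletteColorable G α := by
  classical
  obtain ⟨c, S, h, hS⟩ := h.exists_card_eq_three_deleteIncidenceSet hdeg
  obtain ⟨a, ha⟩ := exists_forall_mem_freeColors (c := c) (fun w => (hS w).le) hdeg
  have : Nonempty α := ⟨a v⟩
  have hL : ∀ w ∈ G.neighborFinset v,
      #(G.neighborFinset v) ≤ #(S w \ (G.neighborFinset v).image a) := fun w hw => by
    have := card_lt_card_sdiff_image_add_card hw (mem_freeColors.1 (ha w hw)).1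
    rw [card_neighborFinset_eq_degree] at this ⊢
    have := hS w
    omega
  obtain ⟨x, hx, hinj⟩ := exists_injOn_of_card_le_card hL
  exact h.extend (hv.trans (by norm_num)) ha hx hinj

section DegreeThree

variable [DecidableEq V] [DecidableEq α]

lemma IsPaletteColoring.paletteColorable_of_three_le_card_biUnion
    (h : IsPaletteColoring (G.deleteIncidenceSet v) c S) (hv : G.degree v = 3) (hvu : G.Adj v u)
    (hcard : #(S u) + G.degree u + 1 < Fintype.card α) {a : V → α}
    (hS : ∀ w ∈ (G.neighborFinset v).erase u, #(S w) = 3)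
    (ha : ∀ w ∈ (G.neighborFinset v).erase u, a w ∈ freeColors (G.deleteIncidenceSet v) c S w)
    (hne : (S u \ ((G.neighborFinset v).erase u).image a).Nonempty)
    (hthree : 3 ≤ #((G.neighborFinset v).biUnion
      fun w => S w \ ((G.neighborFinset v).erase u).image a)) :
    PaletteColorable G α := by
  obtain ⟨x, hx, hinj⟩ := exists_injOn_of_three_le_card_biUnion (i := u) (by simp [hv]) hne
    (fun w hw => by
      have := card_lt_card_sdiff_image_add_card hw (mem_freeColors.1 (ha w hw)).1
      rw [card_erase_of_mem ((G.mem_neighborFinset v u).2 hvu), card_neighborFinset_eq_degree,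
        hv, hS w hw] at this
      omega) hthree
  exact h.extend_of_card_lt hv.le hvu (by omega) ha hx hinj

lemma IsPaletteColoring.subset_union_of_not_paletteColorable
    (h : IsPaletteColoring (G.deleteIncidenceSet v) c S) (hG : ¬PaletteColorable G α)
    (hv : G.degree v = 3) (hvu : G.Adj v u) (hcard : #(S u) + G.degree u + 1 < Fintype.card α)
    {a : V → α} (hS : ∀ w ∈ (G.neighborFinset v).erase u, #(S w) = 3)
    (ha : ∀ w ∈ (G.neighborFinset v).erase u, a w ∈ freeColors (G.deleteIncidenceSet v) c S w)
    {w : V} (hvw : G.Adj v w) {B : Finset α}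
    (hB : B ⊆ S w \ ((G.neighborFinset v).erase u).image a) (hBcard : 2 ≤ #B) :
    S u ⊆ ((G.neighborFinset v).erase u).image a ∪ B := by
  by_contra hsub
  obtain ⟨t, htu, ht⟩ := not_subset.1 hsub
  rw [mem_union, not_or] at ht
  have htu' : t ∈ S u \ ((G.neighborFinset v).erase u).image a := mem_sdiff.2 ⟨htu, ht.1⟩
  refine hG (h.paletteColorable_of_three_le_card_biUnion hv hvu hcard hS ha ⟨t, htu'⟩ ?_)
  have hinsert : insert t B ⊆ (G.neighborFinset v).biUnion
      fun w => S w \ ((G.neighborFinset v).erase u).image a :=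
    insert_subset (mem_biUnion.2 ⟨u, by simpa using hvu, htu'⟩)
      (hB.trans (subset_biUnion_of_mem
        (fun w => S w \ ((G.neighborFinset v).erase u).image a) ((G.mem_neighborFinset v w).2 hvw)))
  have := card_le_card hinsert
  rw [card_insert_of_notMem ht.2] at this
  omega

lemma IsPaletteColoring.recolored_palette_subset_union
    (h : IsPaletteColoring (G.deleteIncidenceSet v) c S) (hG : ¬PaletteColorable G α)
    (hv : G.degree v = 3) (hvu : G.Adj v u) {a : V → α}
    (hS : ∀ w ∈ (G.neighborFinset v).erase u, #(S w) = 3)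
    (ha : ∀ w ∈ (G.neighborFinset v).erase u, a w ∈ freeColors (G.deleteIncidenceSet v) c S w)
    {w : V} (hw : w ∈ (G.neighborFinset v).erase u) {B : Finset α}
    (hB : B ⊆ S w \ ((G.neighborFinset v).erase u).image a) (hBcard : 2 ≤ #B)
    {g : V → α} (hg : ∀ y, (G.deleteIncidenceSet v).Adj u y →
      g y ∈ recolorings (G.deleteIncidenceSet v) c S u y)
    (hgv : ∀ y, G.Adj v y → g y = c y u) {T : Finset α}
    (hgT : ((G.deleteIncidenceSet v).neighborFinset u).image g ⊆ T) (hT : #T ≤ 3)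
    (hTout : Disjoint T (outColors (G.deleteIncidenceSet v) c u))
    (hcard : #T + G.degree u + 1 < Fintype.card α) :
    T ⊆ ((G.neighborFinset v).erase u).image a ∪ B := by
  have hM : ∀ y ∈ (G.neighborFinset v).erase u, y ≠ u ∧ G.Adj v y := fun y hy => by
    simpa using hy
  have h' := h.recolor hg (fun y hy => hgT (mem_image_of_mem g (by simpa using hy))) hT hTout
  have hfree : ∀ y ∈ (G.neighborFinset v).erase u,
      freeColors (G.deleteIncidenceSet v) (fun y => update (c y) u (g y)) (update S u T) y =
        freeColors (G.deleteIncidenceSet v) c S y := fun y hy => by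
    ext
    simp [(hM y hy).1, hgv y (hM y hy).2]
  simpa using h'.subset_union_of_not_paletteColorable hG hv hvu (by simpa using hcard)
    (fun y hy => by simpa [(hM y hy).1] using hS y hy) (fun y hy => hfree y hy ▸ ha y hy)
    (hM w hw).2 (by simpa [(hM w hw).1] using hB) hBcard

-- If recoloring the incidences `(w, wu)` does not help, then their colors always form a full
-- palette inside a set `Q` that does not depend on the recoloring `g`.
lemma IsPaletteColoring.exists_card_le_four_of_not_paletteColorable
    (h : IsPaletteColoring (G.deleteIncidenceSet v) c S) (hG : ¬PaletteColorable G α)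
    (hdeg : ∀ w, G.degree w + 3 ≤ Fintype.card α) (hα : 10 ≤ Fintype.card α)
    (hS : ∀ w, #(S w) = 3) (hv : G.degree v = 3) (hvu : G.Adj v u) (hu : G.degree u ≤ 4) :
    ∃ Q : Finset α, #Q ≤ 4 ∧ ∀ g : V → α,
      (∀ w, (G.deleteIncidenceSet v).Adj u w →
        g w ∈ recolorings (G.deleteIncidenceSet v) c S u w) →
      (∀ w, G.Adj v w → g w = c w u) →
      3 ≤ #(((G.deleteIncidenceSet v).neighborFinset u).image g) ∧
        ((G.deleteIncidenceSet v).neighborFinset u).image g ⊆ Q := by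
  set D := G.deleteIncidenceSet v
  set M := (G.neighborFinset v).erase u with hM
  obtain ⟨a, ha⟩ := exists_forall_mem_freeColors (v := v) (c := c) (fun w => (hS w).le) hdeg
  have hMcard : #M = 2 := by simp [hM, hvu, hv]
  obtain ⟨w, hw⟩ : M.Nonempty := card_pos.1 (by omega)
  obtain ⟨B, hB, hBcard⟩ : ∃ B ⊆ S w \ M.image a, #B = 2 := by
    refine exists_subset_card_eq ?_
    have := card_lt_card_sdiff_image_add_card hw
      (mem_freeColors.1 (ha w (mem_of_mem_erase hw))).1
    have := hS w
    omega
  have hdegD : D.degree u + 1 = G.degree u := degree_deleteIncidenceSet_add_one hvu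
  have hQ : #(M.image a ∪ B) ≤ 4 := by
    have := card_union_le (M.image a) B
    have := card_image_le (s := M) (f := a)
    omega
  refine ⟨M.image a ∪ B, hQ, fun g hg hgv => ?_⟩
  have hsub : ∀ T, (D.neighborFinset u).image g ⊆ T → #T ≤ 3 → Disjoint T (outColors D c u) →
      T ⊆ M.image a ∪ B := fun T hgT hT hTout =>
    h.recolored_palette_subset_union hG hv hvu (fun y _ => hS y)
      (fun y hy => ha y (mem_of_mem_erase hy)) hw hB hBcard.ge hg hgv hgT hT hTout (by omega)
  have hgout : Disjoint ((D.neighborFinset u).image g) (outColors D c u) :=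
    disjoint_image_outColors_of_mem_recolorings hg
  have hgcard : #((D.neighborFinset u).image g) ≤ D.degree u := card_image_le
  have hout : #(outColors D c u) ≤ D.degree u := card_outColors_le u
  exact three_le_card_and_subset_of_forall_superset_subset
    (hgcard.trans (by omega)) hgout (by omega) hsub

end DegreeThree

lemma PaletteColorable.of_degree_le_five_of_degree_le_six {w : V}
    (h : PaletteColorable (G.deleteIncidenceSet v) α)
    (hdeg : ∀ w, G.degree w + 3 ≤ Fintype.card α) (hα : 10 ≤ Fintype.card α)
    (hv : G.degree v = 3) (hvu : G.Adj v u) (hvw : G.Adj v w) (huw : u ≠ w)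
    (hu : G.degree u ≤ 5) (hw : G.degree w ≤ 6) : PaletteColorable G α := by
  classical
  obtain ⟨c, S, h, hS⟩ := h.exists_card_eq_three_deleteIncidenceSet hdeg
  obtain ⟨a, ha⟩ := exists_forall_mem_freeColors (v := v) (c := c) (fun w => (hS w).le) hdeg
  have hfree : 1 < #(freeColors (G.deleteIncidenceSet v) c S w) := by
    have := card_le_card_freeColors_add (G := G.deleteIncidenceSet v) (c := c) (S := S) w
    have := degree_deleteIncidenceSet_add_one hvw
    have := hS w
    omega
  have hwM : w ∈ (G.neighborFinset v).erase u := by simp [huw.symm, hvw]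
  obtain ⟨y, hy⟩ : ∃ y, ((G.neighborFinset v).erase u).erase w = {y} := by
    rw [← card_eq_one, card_erase_of_mem hwM, card_erase_of_mem (by simpa using hvu)]
    simp [hv]
  obtain ⟨hyw, -, hvy⟩ : y ≠ w ∧ y ≠ u ∧ G.Adj v y := by
    simpa using (Finset.ext_iff.1 hy y).2 (mem_singleton_self y)
  obtain ⟨e, he, hthree⟩ := exists_three_le_card_sdiff_pair_union (hS w) (hS y) hfree
    (disjoint_right.2 fun _ hb => (mem_freeColors.1 hb).1)
    (mem_freeColors.1 (ha y (by simpa using hvy))).1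
  have himage : ((G.neighborFinset v).erase u).image (update a w e) = {e, a y} := by
    rw [← insert_erase hwM, hy]
    simp [hyw]
  refine h.paletteColorable_of_three_le_card_biUnion hv hvu (by have := hS u; omega)
    (a := update a w e) (fun z _ => hS z) (fun z hz => ?_) ?_ ?_
  · obtain rfl | hzw := eq_or_ne z w
    · simpa using he
    · rw [update_of_ne hzw]
      exact ha z (mem_of_mem_erase hz)
  · rw [himage]
    have := le_card_sdiff {e, a y} (S u)
    have := card_le_two (a := e) (b := a y)
    exact card_pos.1 (by have := hS u; omega)
  · rw [himage]
    refine hthree.trans (card_le_card (union_subset ?_ ?_))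
    · exact subset_biUnion_of_mem (fun z => S z \ {e, a y}) (by simpa using hvw)
    · exact subset_biUnion_of_mem (fun z => S z \ {e, a y}) (by simpa using hvy)

lemma PaletteColorable.of_degree_eq_three_of_degree_le_three
    (h : PaletteColorable (G.deleteIncidenceSet v) α)
    (hdeg : ∀ w, G.degree w + 3 ≤ Fintype.card α) (hα : 10 ≤ Fintype.card α)
    (hv : G.degree v = 3) (hvu : G.Adj v u) (hu : G.degree u ≤ 3) : PaletteColorable G α := by
  classical
  by_contra hG
  obtain ⟨c, S, h, hS⟩ := h.exists_card_eq_three_deleteIncidenceSet hdeg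
  obtain ⟨Q, -, hQ⟩ :=
    h.exists_card_le_four_of_not_paletteColorable hG hdeg hα hS hv hvu (hu.trans (by norm_num))
  have hthree := (hQ (fun w => c w u) (fun w huw => h.mem_recolorings_self huw) fun _ _ => rfl).1
  have := hthree.trans card_image_le
  rw [card_neighborFinset_eq_degree] at this
  have := degree_deleteIncidenceSet_add_one hvu
  omega

lemma PaletteColorable.of_degree_le_four_of_degree_le_four {w₀ w₁ : V}
    (h : PaletteColorable (G.deleteIncidenceSet v) α)
    (hdeg : ∀ w, G.degree w + 3 ≤ Fintype.card α) (hα : 10 ≤ Fintype.card α)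
    (hv : G.degree v = 3) (hvu : G.Adj v u) (hu : G.degree u ≤ 4)
    (huw₀ : G.Adj u w₀) (huw₁ : G.Adj u w₁) (hne : w₀ ≠ w₁) (hw₀v : w₀ ≠ v) (hw₁v : w₁ ≠ v)
    (hvw₀ : ¬G.Adj v w₀) (hvw₁ : ¬G.Adj v w₁)
    (hw₀ : G.degree w₀ ≤ 4) (hw₁ : G.degree w₁ ≤ 4) : PaletteColorable G α := by
  classical
  by_contra hG
  obtain ⟨c, S, h, hS⟩ := h.exists_card_eq_three_deleteIncidenceSet hdeg
  obtain ⟨Q, hQcard, hQ⟩ :=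
    h.exists_card_le_four_of_not_paletteColorable hG hdeg hα hS hv hvu hu
  set D := G.deleteIncidenceSet v
  have hdegD : D.degree u + 1 = G.degree u := degree_deleteIncidenceSet_add_one hvu
  have hDw₀ : D.Adj u w₀ := deleteIncidenceSet_adj.2 ⟨huw₀, hvu.ne', hw₀v⟩
  have hDw₁ : D.Adj u w₁ := deleteIncidenceSet_adj.2 ⟨huw₁, hvu.ne', hw₁v⟩
  have two_le : ∀ w, D.Adj u w → G.degree w ≤ 4 → 2 ≤ #(recolorings D c S u w) := by
    intro w huw hw
    have := h.card_add_two_le_card_recolorings_add huw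
    have : D.degree w ≤ G.degree w := degree_deleteIncidenceSet_le
    have := hS w
    omega
  set R := ((D.neighborFinset u).erase w₀).erase w₁ with hR
  have hRcard : #R ≤ 1 := by
    rw [hR, card_erase_of_mem (by simp [hne.symm, hDw₁]), card_erase_of_mem (by simpa using hDw₀),
      card_neighborFinset_eq_degree]
    omega
  have hinsert : ∀ y₀ ∈ recolorings D c S u w₀, ∀ y₁ ∈ recolorings D c S u w₁,
      3 ≤ #(insert y₀ (insert y₁ (R.image fun w => c w u))) ∧
        insert y₀ (insert y₁ (R.image fun w => c w u)) ⊆ Q := fun y₀ h₀ y₁ h₁ => by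
    rw [← image_update_update_eq_insert_insert (by simpa using hDw₀) (by simpa using hDw₁) hne]
    refine hQ _ (fun w huw => ?_) fun w hvw => ?_
    · have := h.mem_recolorings_self huw
      grind
    · have : w ≠ w₁ ∧ w ≠ w₀ := ⟨fun hw => hvw₁ (hw ▸ hvw), fun hw => hvw₀ (hw ▸ hvw)⟩
      simp [this]
  have := five_le_card_of_forall_three_le_card_insert (two_le w₀ hDw₀ hw₀) (two_le w₁ hDw₁ hw₁)
    (card_image_le.trans hRcard) (fun y₀ h₀ y₁ h₁ => (hinsert y₀ h₀ y₁ h₁).1)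
    fun y₀ h₀ y₁ h₁ => (hinsert y₀ h₀ y₁ h₁).2
  omega

end ReducibleConfigurations

section Discharging

open Finset

/-- None of the four configurations that a minimal graph without palette coloring avoids occurs in
`G`. -/
structure HasNoReducibleConfiguration {V : Type*} (G : SimpleGraph V) [G.LocallyFinite] :
    Prop where
  three_le_degree : ∀ ⦃v u⦄, G.Adj v u → 3 ≤ G.degree v
  four_le_degree : ∀ ⦃v u⦄, G.Adj v u → G.degree v = 3 → 4 ≤ G.degree u
  seven_le_degree : ∀ ⦃v u w⦄, G.Adj v u → G.Adj v w → u ≠ w → G.degree v = 3 →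
    G.degree u ≤ 5 → 7 ≤ G.degree w
  five_le_degree : ∀ ⦃u v w₀ w₁⦄, G.Adj u v → G.Adj u w₀ → G.Adj u w₁ → w₀ ≠ v → w₁ ≠ v →
    w₀ ≠ w₁ → G.degree u = 4 → G.degree v = 3 → G.degree w₀ ≤ 4 → 5 ≤ G.degree w₁

variable {V α : Type*} [Fintype V] {G : SimpleGraph V} [DecidableRel G.Adj]

lemma hasNoReducibleConfiguration_of_not_paletteColorable [Fintype α]
    (h : ∀ ⦃v u⦄, G.Adj v u → PaletteColorable (G.deleteIncidenceSet v) α)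
    (hG : ¬PaletteColorable G α) (hdeg : ∀ v, G.degree v + 3 ≤ Fintype.card α)
    (hα : 10 ≤ Fintype.card α) : HasNoReducibleConfiguration G := by
  have seven_le : ∀ ⦃v u w⦄, G.Adj v u → G.Adj v w → u ≠ w → G.degree v = 3 →
      G.degree u ≤ 5 → 7 ≤ G.degree w := by
    intro v u w hvu hvw huw hv hu
    by_contra! hlt
    exact hG ((h hvu).of_degree_le_five_of_degree_le_six hdeg hα hv hvu hvw huw hu (by omega))
  refine ⟨fun v u hvu => ?_, fun v u hvu hv => ?_, seven_le, ?_⟩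
  · by_contra! hlt
    exact hG ((h hvu).of_degree_le_two hdeg (by omega))
  · by_contra! hlt
    exact hG ((h hvu).of_degree_eq_three_of_degree_le_three hdeg hα hv hvu (by omega))
  · intro u v w₀ w₁ huv huw₀ huw₁ hw₀v hw₁v hne hu hv hw₀
    by_contra! hlt
    have not_adj : ∀ w, G.Adj u w → G.degree w ≤ 4 → ¬G.Adj v w := fun w huw hw hvw => by
      have := seven_le huv.symm hvw huw.ne hv (by omega)
      omega
    exact hG ((h huv.symm).of_degree_le_four_of_degree_le_four hdeg hα hv huv.symm hu.le huw₀ huw₁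
      hne hw₀v hw₁v (not_adj w₀ huw₀ hw₀) (not_adj w₁ huw₁ (by omega)) hw₀ (by omega))

/-- The charge that a vertex of degree `m` sends to a neighbor of degree `n` in the discharging
argument, in which every vertex starts with its degree as charge. A vertex of degree `m ≥ 5` must
not send more than `m - 4` altogether, and a vertex of degree `3` must receive at least `1`. -/
def sentCharge (m n : ℕ) : ℚ :=
  if n ≤ 4 ∧ n < m then if 7 ≤ m then 2 / 5 else if m = 6 then 1 / 3 else 1 / 5 else 0

/-- The charge of `v` after discharging. -/
def finalCharge {V : Type*} (G : SimpleGraph V) [G.LocallyFinite] (v : V) : ℚ :=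
  G.degree v + ∑ u ∈ G.neighborFinset v,
    (sentCharge (G.degree u) (G.degree v) - sentCharge (G.degree v) (G.degree u))

lemma sum_sum_neighborFinset_comm {M : Type*} [AddCommMonoid M] (f : V → V → M) :
    ∑ v, ∑ u ∈ G.neighborFinset v, f u v = ∑ v, ∑ u ∈ G.neighborFinset v, f v u :=
  sum_comm' fun v u => by simp [G.adj_comm]

lemma sum_finalCharge : ∑ v, finalCharge G v = ∑ v, (G.degree v : ℚ) := by
  simp only [finalCharge, sum_add_distrib, sum_sub_distrib]
  rw [sum_sum_neighborFinset_comm fun u v => sentCharge (G.degree u) (G.degree v), sub_self,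
    add_zero]

lemma sentCharge_of_five_le (m : ℕ) {n : ℕ} (hn : 5 ≤ n) : sentCharge m n = 0 :=
  if_neg (by omega)

lemma neg_one_fifth_le_sentCharge_sub (n : ℕ) :
    -(1 / 5) ≤ sentCharge n 4 - sentCharge 4 n := by
  unfold sentCharge
  split_ifs <;> first | omega | norm_num

lemma sentCharge_sub_nonneg {n : ℕ} (hn : 4 ≤ n) : 0 ≤ sentCharge n 4 - sentCharge 4 n := by
  unfold sentCharge
  split_ifs <;> first | omega | norm_num

lemma one_fifth_le_sentCharge_sub {n : ℕ} (hn : 5 ≤ n) :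
    1 / 5 ≤ sentCharge n 4 - sentCharge 4 n := by
  unfold sentCharge
  split_ifs <;> first | omega | norm_num

lemma exists_forall_sentCharge_le {m : ℕ} (hm : 5 ≤ m) :
    ∃ t : ℚ, (∀ n, sentCharge m n ≤ t) ∧ m * t ≤ m - 4 := by
  obtain rfl | rfl | hm : m = 5 ∨ m = 6 ∨ 7 ≤ m := by omega
  · exact ⟨1 / 5, fun n => by unfold sentCharge; split_ifs <;> first | omega | norm_num,
      by norm_num⟩
  · exact ⟨1 / 3, fun n => by unfold sentCharge; split_ifs <;> first | omega | norm_num,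
      by norm_num⟩
  · refine ⟨2 / 5, fun n => by unfold sentCharge; split_ifs <;> first | omega | norm_num, ?_⟩
    have : (7 : ℚ) ≤ m := by exact_mod_cast hm
    linarith

lemma four_le_finalCharge_of_five_le_degree {v : V} (hv : 5 ≤ G.degree v) :
    4 ≤ finalCharge G v := by
  obtain ⟨t, ht, hdeg⟩ := exists_forall_sentCharge_le hv
  have hsum : #(G.neighborFinset v) • -t ≤ ∑ u ∈ G.neighborFinset v,
      (sentCharge (G.degree u) (G.degree v) - sentCharge (G.degree v) (G.degree u)) :=
    card_nsmul_le_sum _ _ _ fun u _ => by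
      rw [sentCharge_of_five_le _ hv, zero_sub]
      exact neg_le_neg (ht _)
  rw [card_neighborFinset_eq_degree, nsmul_eq_mul] at hsum
  rw [finalCharge]
  linarith

namespace HasNoReducibleConfiguration

lemma four_le_finalCharge_of_degree_eq_three (h : HasNoReducibleConfiguration G) {v : V}
    (hv : G.degree v = 3) : 4 ≤ finalCharge G v := by
  classical
  have hsent : ∀ u ∈ G.neighborFinset v,
      sentCharge (G.degree v) (G.degree u) = 0 := fun u hu => by
    have := h.four_le_degree ((G.mem_neighborFinset v u).1 hu) hv
    exact if_neg (by omega)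
  rw [finalCharge, sum_congr rfl fun u hu => by rw [hsent u hu, sub_zero], hv]
  suffices 1 ≤ ∑ u ∈ G.neighborFinset v, sentCharge (G.degree u) 3 by norm_num; linarith
  by_cases hfive : ∃ u ∈ G.neighborFinset v, G.degree u ≤ 5
  · obtain ⟨u, hu, hu₅⟩ := hfive
    rw [mem_neighborFinset] at hu
    have hsum : #((G.neighborFinset v).erase u) • (2 / 5 : ℚ) ≤
        ∑ w ∈ (G.neighborFinset v).erase u, sentCharge (G.degree w) 3 :=
      card_nsmul_le_sum _ _ _ fun w hw => by
        rw [mem_erase, mem_neighborFinset] at hw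
        have := h.seven_le_degree hu hw.2 hw.1.symm hv hu₅
        rw [sentCharge, if_pos (by omega), if_pos this]
    have hu₃ : sentCharge (G.degree u) 3 = 1 / 5 := by
      have := h.four_le_degree hu hv
      rw [sentCharge, if_pos (by omega), if_neg (by omega), if_neg (by omega)]
    rw [← add_sum_erase _ _ ((G.mem_neighborFinset v u).2 hu), hu₃]
    rw [card_erase_of_mem ((G.mem_neighborFinset v u).2 hu), card_neighborFinset_eq_degree, hv]
      at hsum
    norm_num at hsum
    linarith
  · push Not at hfive
    have hsum : #(G.neighborFinset v) • (1 / 3 : ℚ) ≤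
        ∑ u ∈ G.neighborFinset v, sentCharge (G.degree u) 3 :=
      card_nsmul_le_sum _ _ _ fun u hu => by
        have := hfive u hu
        unfold sentCharge
        split_ifs <;> first | omega | norm_num
    rw [card_neighborFinset_eq_degree, hv] at hsum
    norm_num at hsum
    exact hsum

lemma four_le_finalCharge_of_degree_eq_four (h : HasNoReducibleConfiguration G) {u : V}
    (hu : G.degree u = 4) : 4 ≤ finalCharge G u := by
  classical
  rw [finalCharge, hu]
  suffices 0 ≤ ∑ w ∈ G.neighborFinset u, (sentCharge (G.degree w) 4 - sentCharge 4 (G.degree w)) by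
    rw [Nat.cast_ofNat]
    exact le_add_of_nonneg_right this
  by_cases hthree : ∃ v ∈ G.neighborFinset u, G.degree v = 3
  · obtain ⟨v, hv, hv₃⟩ := hthree
    set M := (G.neighborFinset u).erase v with hM
    have hMcard : #M = 3 := by rw [hM, card_erase_of_mem hv, card_neighborFinset_eq_degree, hu]
    obtain ⟨w, hw, hfive⟩ : ∃ w ∈ M, ∀ y ∈ M.erase w, 5 ≤ G.degree y := by
      by_cases hsmall : ∃ w ∈ M, G.degree w ≤ 4
      · obtain ⟨w, hw, hw₄⟩ := hsmall
        refine ⟨w, hw, fun y hy => ?_⟩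
        simp only [hM, mem_erase, mem_neighborFinset] at hv hw hy
        exact h.five_le_degree hv hw.2 hy.2.2 hw.1 hy.2.1 hy.1.symm hu hv₃ hw₄
      · push Not at hsmall
        obtain ⟨w, hw⟩ : M.Nonempty := card_pos.1 (by omega)
        exact ⟨w, hw, fun y hy => hsmall y (mem_of_mem_erase hy)⟩
    have hsum := card_nsmul_le_sum (M.erase w) _ _ fun y hy =>
      one_fifth_le_sentCharge_sub (hfive y hy)
    rw [card_erase_of_mem hw, hMcard, two_nsmul] at hsum
    rw [← add_sum_erase _ _ hv, ← add_sum_erase _ _ hw]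
    have := neg_one_fifth_le_sentCharge_sub (G.degree v)
    have := neg_one_fifth_le_sentCharge_sub (G.degree w)
    linarith
  · refine sum_nonneg fun w hw => sentCharge_sub_nonneg ?_
    have := h.three_le_degree ((G.mem_neighborFinset u w).1 hw).symm
    have : G.degree w ≠ 3 := fun hw₃ => hthree ⟨w, hw, hw₃⟩
    omega

lemma four_le_finalCharge (h : HasNoReducibleConfiguration G) {v : V} (hv : 0 < G.degree v) :
    4 ≤ finalCharge G v := by
  obtain ⟨u, hvu⟩ := (G.degree_pos_iff_exists_adj v).1 hv
  obtain hv | hv | hv : G.degree v = 3 ∨ G.degree v = 4 ∨ 5 ≤ G.degree v := by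
    have := h.three_le_degree hvu
    omega
  · exact h.four_le_finalCharge_of_degree_eq_three hv
  · exact h.four_le_finalCharge_of_degree_eq_four hv
  · exact four_le_finalCharge_of_five_le_degree hv

lemma four_mul_card_le_sum_degree (h : HasNoReducibleConfiguration G) :
    4 * #{v | 0 < G.degree v} ≤ ∑ v, G.degree v := by
  have hcard : (#{v | 0 < G.degree v} • 4 : ℚ) ≤ ∑ v, (G.degree v : ℚ) := by
    calc (#{v | 0 < G.degree v} • 4 : ℚ)
        ≤ ∑ v with 0 < G.degree v, finalCharge G v :=
          card_nsmul_le_sum _ _ _ fun v hv => h.four_le_finalCharge (mem_filter.1 hv).2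
      _ ≤ ∑ v, finalCharge G v := by
          refine sum_le_sum_of_subset_of_nonneg (filter_subset _ _) fun v _ hv => ?_
          have hv₀ : G.degree v = 0 := by simpa using hv
          have hN : G.neighborFinset v = ∅ :=
            card_eq_zero.1 ((G.card_neighborFinset_eq_degree v).trans hv₀)
          simp [finalCharge, hv₀, hN]
      _ = ∑ v, (G.degree v : ℚ) := sum_finalCharge
  rw [nsmul_eq_mul, mul_comm] at hcard
  exact_mod_cast hcard

end HasNoReducibleConfiguration

end Discharging

section MaximumAverageDegree

open Finset

variable {V α : Type*} {G H : SimpleGraph V} {q : ℝ}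

namespace MadLT

lemma mono (h : MadLT G q) (hle : H ≤ G) : MadLT H q := fun K hK =>
  h { verts := K.verts
      Adj := K.Adj
      adj_sub := fun hadj => hle hadj.adj_sub
      edge_vert := K.edge_vert
      symm := K.symm } hK

variable [Fintype V] [decAdj : DecidableRel G.Adj]

lemma sum_degree_lt (h : MadLT G q) {v u : V} (hvu : G.Adj v u) :
    ((∑ v, G.degree v : ℕ) : ℝ) < q * #{v | 0 < G.degree v} := by
  have hlt := h { verts := G.support
                  Adj := G.Adj
                  adj_sub := id
                  edge_vert := fun hadj => ⟨_, hadj⟩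
                  symm := G.symm } ⟨v, u, hvu⟩
  have hedge : (G.edgeSet.ncard : ℝ) = #G.edgeFinset := by
    rw [← coe_edgeFinset, Set.ncard_coe_finset]
  have hsupport : (G.support.ncard : ℝ) = #{v | 0 < G.degree v} := by
    rw [← Set.ncard_coe_finset]
    congr 2
    ext
    simp [← degree_pos_iff_mem_support]
  rw [sum_degrees_eq_twice_card_edges, Nat.cast_mul, Nat.cast_ofNat, ← hedge, ← hsupport]
  exact hlt

lemma not_hasNoReducibleConfiguration (h : MadLT G 4) {v u : V} (hvu : G.Adj v u) :
    ¬HasNoReducibleConfiguration G := fun hG =>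
  (h.sum_degree_lt hvu).not_ge (by exact_mod_cast hG.four_mul_card_le_sum_degree)

theorem paletteColorable [Fintype α] (h : MadLT G 4) (hα : 10 ≤ Fintype.card α)
    (hdeg : ∀ v, G.degree v + 3 ≤ Fintype.card α) : PaletteColorable G α := by
  induction G using WellFoundedLT.induction generalizing decAdj with
  | ind G ih =>
    classical
    by_contra hG
    have hdelete : ∀ ⦃v u⦄, G.Adj v u → PaletteColorable (G.deleteIncidenceSet v) α := by
      intro v u hvu
      have hle := deleteIncidenceSet_le G v
      refine ih _ (lt_of_le_not_ge hle fun hge => ?_) (h.mono hle) fun w => ?_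
      · exact (deleteIncidenceSet_adj.1 (hge hvu)).2.1 rfl
      · exact (Nat.add_le_add_right degree_deleteIncidenceSet_le 3).trans (hdeg w)
    have : Nonempty α := Fintype.card_pos_iff.1 (by omega)
    obtain ⟨v, u, hvu⟩ : ∃ v u, G.Adj v u := by
      by_contra! hno
      exact hG (paletteColorable_of_forall_not_adj hno)
    exact h.not_hasNoReducibleConfiguration hvu
      (hasNoReducibleConfiguration_of_not_paletteColorable hdelete hG hdeg hα)

end MadLT

end MaximumAverageDegree

theorem incidence_chromatic_mad_lt_four_general {V : Type*} [Fintype V] {G : SimpleGraph V}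
    [DecidableRel G.Adj] (hmad : MadLT G 4) {k : ℕ} (hk : 10 ≤ k) (hΔ : G.maxDegree + 3 ≤ k) :
    HasIncidenceColoring G k 3 := by
  refine (hmad.paletteColorable ?_ fun v => ?_).hasIncidenceColoring
  · rwa [Fintype.card_fin]
  · rw [Fintype.card_fin]
    exact (Nat.add_le_add_right (G.degree_le_maxDegree v) 3).trans hΔ

theorem incidence_chromatic_mad_lt_four {V : Type*} [Fintype V] (G : SimpleGraph V)
    [DecidableRel G.Adj] (hmad : MadLT G 4) (hΔ : 7 ≤ G.maxDegree) :
    incChromaticNumber G ≤ G.maxDegree + 3 := by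
  obtain ⟨φ, hφ, -⟩ := incidence_chromatic_mad_lt_four_general hmad (by omega) le_rfl
  exact Nat.sInf_le ⟨φ, hφ⟩
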